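/- arXiv:2503.12766 — 2 statements merged into one kernel-verified Lean document; each statement's English description precedes it below -/
import Mathlib

section
/- Let X be a well-filtered coherent T0 space. If the product space X × X is a Fréchet space, then X is sober. -/
/-- A subset of a topological space is saturated if it is the intersection of the open sets
containing it. -/
def IsSaturatedSet {X : Type*} [TopologicalSpace X] (A : Set X) : Prop :=
  A = ⋂₀ {U : Set X | IsOpen U ∧ A ⊆ U}

/-- A space is well-filtered if for every filtered family 𝓕 of compact saturated sets and every
open U with ⋂𝓕 ⊆ U, some member of 𝓕 is contained in U. -/
def WellFiltered (X : Type*) [TopologicalSpace X] : Prop :=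
  ∀ 𝓕 : Set (Set X), 𝓕.Nonempty → (∀ K ∈ 𝓕, IsCompact K ∧ IsSaturatedSet K) →
    DirectedOn (fun A B => B ⊆ A) 𝓕 →
    ∀ U : Set X, IsOpen U → ⋂₀ 𝓕 ⊆ U → ∃ K ∈ 𝓕, K ⊆ U

/-- A space is coherent if the intersection of any two compact saturated sets is compact. -/
def Coherent (X : Type*) [TopologicalSpace X] : Prop :=
  ∀ K Q : Set X, IsCompact K → IsSaturatedSet K → IsCompact Q → IsSaturatedSet Q →
    IsCompact (K ∩ Q)

/-!
In a well-filtered space, a nonempty closed set that is directed for the specialization order has a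
generic point: it meets the saturation `nhdsKer {x}` of each of its points, and these compact
saturated sets form a filtered family, so it meets their intersection.

It remains to see that an irreducible closed set `A` is directed. Given `x, y ∈ A`, irreducibility
places `(x, y)` in the closure of the diagonal of `A`, and the Fréchet property of the square yields
one sequence in `A` converging to both `x` and `y`. The saturated tails of this sequence, completed
by either limit, are compact; by coherence so are the intersections of the tails completed by `x`
with those completed by `y`. Well-filteredness gives a point of `A` in all of these, and such a
point lies above both `x` and `y`.
-/

open Filter Set Topology

section Saturated

variable {X : Type*} [TopologicalSpace X] {s t : Set X}

theorem isSaturatedSet_iff_nhdsKer_eq : IsSaturatedSet s ↔ nhdsKer s = s := by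
  rw [IsSaturatedSet, ← nhdsKer_def, eq_comm]

theorem isSaturatedSet_nhdsKer (s : Set X) : IsSaturatedSet (nhdsKer s) :=
  isSaturatedSet_iff_nhdsKer_eq.2 (nhdsKer_nhdsKer s)

theorem IsSaturatedSet.inter (hs : IsSaturatedSet s) (ht : IsSaturatedSet t) :
    IsSaturatedSet (s ∩ t) := by
  rw [isSaturatedSet_iff_nhdsKer_eq] at hs ht ⊢
  refine Subset.antisymm ?_ subset_nhdsKer
  calc nhdsKer (s ∩ t) ⊆ nhdsKer s ∩ nhdsKer t := nhdsKer_inter_subset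
    _ = s ∩ t := by rw [hs, ht]

end Saturated

section WellFiltered

variable {X : Type*} [TopologicalSpace X] {A : Set X}

theorem WellFiltered.inter_iInter_nonempty (hwf : WellFiltered X) {ι : Sort*} [Nonempty ι]
    {K : ι → Set X} (hK : ∀ i, IsCompact (K i)) (hsat : ∀ i, IsSaturatedSet (K i))
    (hdir : Directed (· ⊇ ·) K) (hA : IsClosed A) (hne : ∀ i, (A ∩ K i).Nonempty) :
    (A ∩ ⋂ i, K i).Nonempty := by
  by_contra hempty
  have hsub : ⋂₀ range K ⊆ Aᶜ := fun z hz hzA => hempty ⟨z, hzA, sInter_range K ▸ hz⟩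
  obtain ⟨_, ⟨i, rfl⟩, hi⟩ := hwf (range K) (range_nonempty K)
    (forall_mem_range.2 fun i => ⟨hK i, hsat i⟩) hdir.directedOn_range Aᶜ hA.isOpen_compl hsub
  obtain ⟨z, hzA, hzK⟩ := hne i
  exact hi hzK hzA

theorem WellFiltered.exists_isGenericPoint (hwf : WellFiltered X) (hA : IsClosed A)
    (hne : A.Nonempty) (hdir : DirectedOn (fun x y => y ⤳ x) A) : ∃ z, IsGenericPoint z A := by
  have : Nonempty A := hne.to_subtype
  have hdirKer : Directed (· ⊇ ·) fun x : A => nhdsKer {x.1} := by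
    rintro ⟨x, hx⟩ ⟨y, hy⟩
    obtain ⟨z, hzA, hzx, hzy⟩ := hdir x hx y hy
    exact ⟨⟨z, hzA⟩, specializes_iff_nhdsKer_subset.1 hzx, specializes_iff_nhdsKer_subset.1 hzy⟩
  obtain ⟨z, hzA, hz⟩ := hwf.inter_iInter_nonempty (fun _ => isCompact_singleton.nhdsKer)
    (fun _ => isSaturatedSet_nhdsKer _) hdirKer hA fun x => ⟨x, x.2, subset_nhdsKer rfl⟩
  have hz_specializes (x : X) (hx : x ∈ A) : z ⤳ x :=
    mem_nhdsKer_singleton.1 (mem_iInter.1 hz ⟨x, hx⟩)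
  exact ⟨z, isGenericPoint_iff_specializes.2 fun x =>
    ⟨fun hzx => hzx.mem_closed hA hzA, hz_specializes x⟩⟩

end WellFiltered

section TailSaturation

variable {X : Type*} [TopologicalSpace X] {a : ℕ → X} {x z : X}

/-- The saturation of the `n`-th tail `{a n, a (n + 1), …}` of a sequence together with a point `x`,
usually a limit of the sequence. The point is added to make the set compact. -/
def tailSaturation (a : ℕ → X) (x : X) (n : ℕ) : Set X :=
  nhdsKer (insert x (a '' Ici n))

theorem isSaturatedSet_tailSaturation (a : ℕ → X) (x : X) (n : ℕ) :
    IsSaturatedSet (tailSaturation a x n) :=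
  isSaturatedSet_nhdsKer _

theorem mem_tailSaturation (a : ℕ → X) (x : X) (n : ℕ) : a n ∈ tailSaturation a x n :=
  subset_nhdsKer (mem_insert_of_mem x (mem_image_of_mem a self_mem_Ici))

theorem tailSaturation_antitone (a : ℕ → X) (x : X) : Antitone (tailSaturation a x) :=
  fun _ _ hmn => nhdsKer_mono (insert_subset_insert (image_mono (Ici_subset_Ici.2 hmn)))

theorem isCompact_tailSaturation (ha : Tendsto a atTop (𝓝 x)) (n : ℕ) :
    IsCompact (tailSaturation a x n) := by
  rw [tailSaturation, ← range_add_eq_image_Ici]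
  exact ((tendsto_add_atTop_iff_nat n).2 ha).isCompact_insert_range.nhdsKer

theorem specializes_of_forall_mem_tailSaturation (ha : Tendsto a atTop (𝓝 x))
    (hz : ∀ n, z ∈ tailSaturation a x n) : z ⤳ x := by
  refine specializes_iff_forall_open.2 fun U hU hxU => ?_
  obtain ⟨n, hn⟩ := eventually_atTop.1 (ha.eventually_mem (hU.mem_nhds hxU))
  have htail : insert x (a '' Ici n) ⊆ U := insert_subset hxU (image_subset_iff.2 hn)
  exact nhdsKer_minimal htail hU (hz n)

end TailSaturation

section Irreducible

variable {X : Type*} [TopologicalSpace X] {A : Set X} {x y : X}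

theorem closure_prod_closure_subset_closure_diag_of_isPreirreducible (hA : IsPreirreducible A) :
    closure A ×ˢ closure A ⊆ closure ((fun a => (a, a)) '' A) := by
  rintro ⟨x, y⟩ ⟨hx, hy⟩
  refine mem_closure_iff.2 fun W hW hxyW => ?_
  obtain ⟨U, V, hU, hV, hxU, hyV, hUVW⟩ := isOpen_prod_iff.1 hW x y hxyW
  obtain ⟨a, haA, haU, haV⟩ :=
    hA U V hU hV (inter_comm U A ▸ mem_closure_iff.1 hx U hU hxU)
      (inter_comm V A ▸ mem_closure_iff.1 hy V hV hyV)
  exact ⟨(a, a), hUVW ⟨haU, haV⟩, mem_image_of_mem _ haA⟩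

theorem exists_seq_tendsto_tendsto_of_isPreirreducible [FrechetUrysohnSpace (X × X)]
    (hA : IsPreirreducible A) (hx : x ∈ closure A) (hy : y ∈ closure A) :
    ∃ a : ℕ → X, (∀ n, a n ∈ A) ∧ Tendsto a atTop (𝓝 x) ∧ Tendsto a atTop (𝓝 y) := by
  obtain ⟨p, hp, hlim⟩ := mem_closure_iff_seq_limit.1
    (closure_prod_closure_subset_closure_diag_of_isPreirreducible hA (mk_mem_prod hx hy))
  choose a haA hap using hp
  obtain rfl : (fun n => (a n, a n)) = p := funext hap
  exact ⟨a, haA, hlim.fst_nhds, hlim.snd_nhds⟩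

theorem WellFiltered.exists_specializes_of_tendsto (hwf : WellFiltered X) (hcoh : Coherent X)
    (hA : IsClosed A) {a : ℕ → X} (haA : ∀ n, a n ∈ A) (hax : Tendsto a atTop (𝓝 x))
    (hay : Tendsto a atTop (𝓝 y)) : ∃ z ∈ A, z ⤳ x ∧ z ⤳ y := by
  let K (n : ℕ) : Set X := tailSaturation a x n ∩ tailSaturation a y n
  have hK (n : ℕ) : IsCompact (K n) :=
    hcoh _ _ (isCompact_tailSaturation hax n) (isSaturatedSet_tailSaturation a x n)
      (isCompact_tailSaturation hay n) (isSaturatedSet_tailSaturation a y n)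
  have hsat (n : ℕ) : IsSaturatedSet (K n) :=
    (isSaturatedSet_tailSaturation a x n).inter (isSaturatedSet_tailSaturation a y n)
  have hanti : Antitone K := (tailSaturation_antitone a x).inf (tailSaturation_antitone a y)
  obtain ⟨z, hzA, hz⟩ := hwf.inter_iInter_nonempty hK hsat hanti.directed_ge hA
    fun n => ⟨a n, haA n, mem_tailSaturation a x n, mem_tailSaturation a y n⟩
  have hzK := mem_iInter.1 hz
  exact ⟨z, hzA, specializes_of_forall_mem_tailSaturation hax fun n => (hzK n).1,
    specializes_of_forall_mem_tailSaturation hay fun n => (hzK n).2⟩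

theorem WellFiltered.directedOn_specializes (hwf : WellFiltered X) (hcoh : Coherent X)
    [FrechetUrysohnSpace (X × X)] (hA : IsClosed A) (hirr : IsPreirreducible A) :
    DirectedOn (fun x y => y ⤳ x) A := by
  intro x hx y hy
  obtain ⟨a, haA, hax, hay⟩ :=
    exists_seq_tendsto_tendsto_of_isPreirreducible hirr (subset_closure hx) (subset_closure hy)
  exact hwf.exists_specializes_of_tendsto hcoh hA haA hax hay

end Irreducible

theorem stmt5_general {X : Type*} [TopologicalSpace X] (hwf : WellFiltered X) (hcoh : Coherent X)
    [FrechetUrysohnSpace (X × X)] : QuasiSober X where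
  sober hirr hA :=
    hwf.exists_isGenericPoint hA hirr.nonempty
      (hwf.directedOn_specializes hcoh hA hirr.isPreirreducible)

/-- Let X be a well-filtered coherent T0 space. If the product space X × X is a
Fréchet space, then X is sober. -/
theorem stmt5 {X : Type*} [TopologicalSpace X] [T0Space X]
    (hwf : WellFiltered X) (hcoh : Coherent X)
    [FrechetUrysohnSpace (X × X)] :
    QuasiSober X :=
  stmt5_general hwf hcoh
end

section
/- Let X be a consonant Wilker space. Then the lattice 𝒪(X) of open subsets of X, equipped with the Scott topology, is sober. -/
/-- A space is a Wilker space if whenever a compact set K is covered by two open sets U₁, U₂,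
there are compact sets K₁ ⊆ U₁ and K₂ ⊆ U₂ with K ⊆ K₁ ∪ K₂. -/
def WilkerSpace (X : Type*) [TopologicalSpace X] : Prop :=
  ∀ U₁ U₂ K : Set X, IsOpen U₁ → IsOpen U₂ → IsCompact K → K ⊆ U₁ ∪ U₂ →
    ∃ K₁ K₂ : Set X, IsCompact K₁ ∧ IsCompact K₂ ∧ K₁ ⊆ U₁ ∧ K₂ ⊆ U₂ ∧ K ⊆ K₁ ∪ K₂

/-- A space is consonant if for every Scott-open family 𝓕 of open sets and every U ∈ 𝓕 there
is a compact saturated set Q with U ∈ Φ(Q) ⊆ 𝓕, where Φ(Q) = {V open | Q ⊆ V}. -/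
def Consonant (X : Type*) [TopologicalSpace X] : Prop :=
  ∀ 𝓕 : Set (TopologicalSpace.Opens X),
    @IsOpen (TopologicalSpace.Opens X) (Topology.scott (TopologicalSpace.Opens X) Set.univ) 𝓕 →
    ∀ U ∈ 𝓕, ∃ Q : Set X, IsCompact Q ∧ IsSaturatedSet Q ∧ Q ⊆ (U : Set X) ∧
      {V : TopologicalSpace.Opens X | Q ⊆ (V : Set X)} ⊆ 𝓕

/-- A poset is Scott sober if, equipped with its Scott topology, it is a sober space
(T0 and every irreducible closed set is the closure of a point). -/
def ScottSober (L : Type*) [Preorder L] : Prop :=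
  @T0Space L (Topology.scott L Set.univ) ∧ @QuasiSober L (Topology.scott L Set.univ)

/-!
Consonance writes Scott open families as unions of families `Φ(Q) = {V | Q ⊆ V}` with `Q` compact,
and the Wilker property turns a cover of `Q` by `U₁ ∪ U₂` into neighbourhoods `Φ(K₁)` of `U₁` and
`Φ(K₂)` of `U₂` whose binary unions all contain `Q`. So binary union is jointly continuous for the
Scott topology. In any semilattice with jointly continuous `⊔`, an irreducible closed set is closed
under `⊔`, because `c ⊔ c = c`. It is therefore directed, and a directed Scott closed set contains
its supremum, which generates it.
-/

section

open Set TopologicalSpace Topology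

theorem supClosed_of_isPreirreducible_of_isClosed {L : Type*} [SemilatticeSup L]
    [TopologicalSpace L] [ContinuousSup L] {A : Set L} (hirr : IsPreirreducible A)
    (hclosed : IsClosed A) : SupClosed A := by
  intro a ha b hb
  by_contra hab
  have hopen : IsOpen {p : L × L | p.1 ⊔ p.2 ∈ Aᶜ} := hclosed.isOpen_compl.preimage continuous_sup
  obtain ⟨N, M, hN, hM, haN, hbM, hNM⟩ := isOpen_prod_iff.1 hopen a b hab
  obtain ⟨c, hcA, hcN, hcM⟩ := hirr N M hN hM ⟨a, ha, haN⟩ ⟨b, hb, hbM⟩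
  have hcc : c ⊔ c ∉ A := hNM (mk_mem_prod hcN hcM)
  rw [sup_idem] at hcc
  exact hcc hcA

theorem isGenericPoint_of_isLUB_of_directedOn {P : Type*} [Preorder P] [TopologicalSpace P]
    [IsScott P univ] {A : Set P} {x : P} (hclosed : IsClosed A) (hne : A.Nonempty)
    (hdir : DirectedOn (· ≤ ·) A) (hx : IsLUB A x) : IsGenericPoint x A := by
  have hxA : x ∈ A := IsScott.dirSupClosed_of_isClosed hclosed Subset.rfl hne hdir hx
  rw [isGenericPoint_def, IsScott.closure_singleton]
  exact ((IsScott.isLowerSet_of_isClosed hclosed).Iic_subset hxA).antisymm hx.1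

theorem quasiSober_of_continuousSup (L : Type*) [CompleteLattice L] [TopologicalSpace L]
    [IsScott L univ] [ContinuousSup L] : QuasiSober L where
  sober {A} hirr hclosed := by
    have hsup : SupClosed A := supClosed_of_isPreirreducible_of_isClosed hirr.2 hclosed
    have hdir : DirectedOn (· ≤ ·) A := directedOn_of_sup_mem fun _ _ ha hb => hsup ha hb
    exact ⟨sSup A, isGenericPoint_of_isLUB_of_directedOn hclosed hirr.1 hdir (isLUB_sSup A)⟩

variable {X : Type*} [TopologicalSpace X] [TopologicalSpace (Opens X)] [IsScott (Opens X) univ]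

theorem isOpen_setOf_subset_of_isCompact {K : Set X} (hK : IsCompact K) :
    IsOpen {V : Opens X | K ⊆ V} := by
  rw [IsScott.isOpen_iff_isUpperSet_and_dirSupInaccOn (D := univ), dirSupInaccOn_univ]
  refine ⟨fun _ _ hUV hKU => Subset.trans hKU hUV, fun d hne hdir U hU hKU => ?_⟩
  have : Nonempty d := hne.to_subtype
  have hcover : K ⊆ ⋃ V : d, ((V : Opens X) : Set X) := by
    rwa [← biUnion_eq_iUnion d fun V _ => (V : Set X), ← Opens.coe_sSup, hU.sSup_eq]
  obtain ⟨V, hKV⟩ := hK.elim_directed_cover (fun V : d => ((V : Opens X) : Set X))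
    (fun V => V.1.isOpen) hcover hdir.directed_val
  exact ⟨V, V.2, hKV⟩

theorem Consonant.continuousSup (hcons : Consonant X) (hwilker : WilkerSpace X) :
    ContinuousSup (Opens X) := by
  refine ⟨continuous_def.2 fun 𝓕 h𝓕 => isOpen_prod_iff.2 fun U₁ U₂ hU => ?_⟩
  rw [IsScott.topology_eq (Opens X) univ] at h𝓕
  obtain ⟨Q, hQ, -, hQU, hQ𝓕⟩ := hcons 𝓕 h𝓕 (U₁ ⊔ U₂) hU
  obtain ⟨K₁, K₂, hK₁, hK₂, hKU₁, hKU₂, hQK⟩ := hwilker U₁ U₂ Q U₁.isOpen U₂.isOpen hQ hQU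
  exact ⟨{V | K₁ ⊆ V}, {V | K₂ ⊆ V}, isOpen_setOf_subset_of_isCompact hK₁,
    isOpen_setOf_subset_of_isCompact hK₂, hKU₁, hKU₂,
    fun _ hV => hQ𝓕 (hQK.trans (union_subset_union hV.1 hV.2))⟩

end

/-- Let X be a consonant Wilker space. Then the lattice 𝒪(X) of open subsets
of X, equipped with the Scott topology, is sober. -/
theorem stmt16 {X : Type*} [TopologicalSpace X]
    (hcons : Consonant X) (hwilker : WilkerSpace X) :
    ScottSober (TopologicalSpace.Opens X) := by
  let : TopologicalSpace (TopologicalSpace.Opens X) :=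
    Topology.scott (TopologicalSpace.Opens X) Set.univ
  have : Topology.IsScott (TopologicalSpace.Opens X) Set.univ := ⟨rfl⟩
  have : ContinuousSup (TopologicalSpace.Opens X) := hcons.continuousSup hwilker
  exact ⟨inferInstance, quasiSober_of_continuousSup (TopologicalSpace.Opens X)⟩
end
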